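/- Let T be a normal, steep rank-one transformation, and suppose the sequence of cuts (r_n) is nondecreasing with sup_n r_n = ∞. Then T is zero-type: μ(A ∩ T^n A) → 0 as n → ∞ for every measurable set A of finite measure. -/

import Mathlib

open MeasureTheory Filter Set Pointwise

/-- A rank-one cutting-and-stacking transformation of a subset `X ⊆ ℝ` (with Lebesgue
measure), given by columns `C n` consisting of `h n` levels (open intervals) of width `w n`,
with `pos n j` the left endpoint of the level of height `j` in column `C n`; column `C (n+1)`
is obtained from `C n` by cutting into `r n ≥ 2` subcolumns of equal width, adding `s n k`
spacers above the `k`-th subcolumn, and stacking. -/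
structure RankOne where
  X : Set ℝ
  T : ℝ ≃ᵐ ℝ
  r : ℕ → ℕ
  s : ℕ → ℕ → ℕ
  h : ℕ → ℕ
  w : ℕ → ℝ
  pos : ℕ → ℕ → ℝ
  hr : ∀ n, 2 ≤ r n
  h0 : h 0 = 1
  w0 : w 0 = 1
  pos0 : pos 0 0 = 0
  hrec : ∀ n, h (n + 1) = ∑ k ∈ Finset.range (r n), (h n + s n k)
  wrec : ∀ n, w (n + 1) = w n / (r n : ℝ)
  hX : X = ⋃ n, ⋃ j < h n, Set.Ioo (pos n j) (pos n j + w n)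
  disj : ∀ n, ∀ j < h n, ∀ j' < h n, j ≠ j' →
    Disjoint (Set.Ioo (pos n j) (pos n j + w n)) (Set.Ioo (pos n j') (pos n j' + w n))
  stack : ∀ n, ∀ j < h n, ∀ k < r n,
    pos (n + 1) ((∑ i ∈ Finset.range k, (h n + s n i)) + j) = pos n j + (k : ℝ) * w (n + 1)
  Tmap : ∀ n j, j + 1 < h n → ∀ x ∈ Set.Ioo (pos n j) (pos n j + w n),
    T x = x + (pos n (j + 1) - pos n j)
  Tbij : Set.BijOn (⇑T) X X
  Tpres : MeasurePreserving (⇑T) (volume.restrict X) (volume.restrict X)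

namespace RankOne

/-- The level of height `j` in column `C n`. -/
def lvl (S : RankOne) (n j : ℕ) : Set ℝ := Set.Ioo (S.pos n j) (S.pos n j + S.w n)

/-- The measure on the space: Lebesgue measure restricted to `X`. -/
noncomputable def μ (S : RankOne) : Measure ℝ := volume.restrict S.X

/-- The intrinsic weight sequence `u n F = μ(F ∩ TⁿF) / μ(F)²`. -/
noncomputable def u (S : RankOne) (F : Set ℝ) (n : ℕ) : ℝ :=
  (S.μ (F ∩ (⇑S.T)^[n] '' F)).toReal / (S.μ F).toReal ^ 2

/-- `a n F = ∑_{k<n} u k F`. -/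
noncomputable def a (S : RankOne) (F : Set ℝ) (n : ℕ) : ℝ :=
  ∑ k ∈ Finset.range n, S.u F k

/-- `T` is normal if spacers are added above the rightmost subcolumn infinitely often. -/
def Normal (S : RankOne) : Prop := ∀ m, ∃ n, m ≤ n ∧ 0 < S.s n (S.r n - 1)

/-- `T` grows exponentially: `2 s_{n, r_n - 1} ≥ h_{n+1}` for every `n`. -/
def ExpGrowing (S : RankOne) : Prop := ∀ n, S.h (n + 1) ≤ 2 * S.s n (S.r n - 1)

/-- `T` has a bounded number of cuts: `sup r_n < ∞`. -/
def BoundedCuts (S : RankOne) : Prop := ∃ c, ∀ n, S.r n ≤ c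

/-- `H n = {0} ∪ {∑_{k≤i} (h n + s n k) : 0 ≤ i < r n - 1}`. -/
def Hset (S : RankOne) (n : ℕ) : Finset ℕ :=
  insert 0 ((Finset.range (S.r n - 1)).image fun i => ∑ k ∈ Finset.range (i + 1), (S.h n + S.s n k))

/-- The set of heights in column `C N` of the descendants of the level of height `p`
in column `C j`: `D(J, N) = p + H j ⊕ H (j+1) ⊕ ⋯ ⊕ H (N-1)`. -/
def desc (S : RankOne) (j p : ℕ) : ℕ → Finset ℕ
  | 0 => {p}
  | N + 1 => if N < j then {p} else desc S j p N + S.Hset N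

/-- `M m`: the maximal height of a descendant of the unit interval `I` in column `C m`. -/
def M (S : RankOne) (m : ℕ) : ℕ := (S.desc 0 0 m).sup id

/-- The ergodic sum `S_n(1_F)(x) = ∑_{k<n} 1_F(T^k x)`. -/
noncomputable def birkhoff (S : RankOne) (F : Set ℝ) (n : ℕ) (x : ℝ) : ℝ :=
  ∑ k ∈ Finset.range n, Set.indicator F (fun _ => (1 : ℝ)) ((⇑S.T)^[k] x)

/-- `T` is rationally weakly mixing on `F`. -/
def RWMOn (S : RankOne) (F : Set ℝ) : Prop :=
  MeasurableSet F ∧ 0 < S.μ F ∧ S.μ F ≠ ⊤ ∧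
  ∀ A B : Set ℝ, MeasurableSet A → A ⊆ F → MeasurableSet B → B ⊆ F →
    Tendsto (fun n => (S.a F n)⁻¹ *
      ∑ k ∈ Finset.range n,
        |(S.μ (A ∩ (⇑S.T)^[k] '' B)).toReal - (S.μ A).toReal * (S.μ B).toReal * S.u F k|)
      atTop (nhds 0)

/-- `T` is rationally weakly mixing. -/
def RWM (S : RankOne) : Prop := ∃ F, S.RWMOn F

/-- `T` is rationally ergodic: some set `F` of positive finite measure satisfies a
Renyi inequality. -/
def RatErgodic (S : RankOne) : Prop :=
  ∃ (F : Set ℝ) (c : ℝ), MeasurableSet F ∧ 0 < S.μ F ∧ S.μ F ≠ ⊤ ∧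
    ∀ n, ∫ x in F, (S.birkhoff F n x) ^ 2 ∂S.μ ≤ c * (∫ x in F, S.birkhoff F n x ∂S.μ) ^ 2

/-- `T` is spectrally weakly mixing: every bounded measurable eigenfunction is a.e. constant. -/
def SpecWM (S : RankOne) : Prop :=
  ∀ (f : ℝ → ℂ) (z : ℂ), Measurable f → (∃ C, ∀ᵐ x ∂S.μ, ‖f x‖ ≤ C) →
    (∀ᵐ x ∂S.μ, f (S.T x) = z * f x) → ∃ c : ℂ, ∀ᵐ x ∂S.μ, f x = c

/-- `T` is zero-type: `μ(A ∩ TⁿA) → 0` for all `A` of finite measure. -/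
def ZeroType (S : RankOne) : Prop :=
  ∀ A : Set ℝ, MeasurableSet A → S.μ A ≠ ⊤ →
    Tendsto (fun n => S.μ (A ∩ (⇑S.T)^[n] '' A)) atTop (nhds 0)

/-- The `i`-th nonzero element of `H n` (for `i < r n - 1`): `e n i = ∑_{k ≤ i} (h n + s n k)`. -/
def e (S : RankOne) (n i : ℕ) : ℕ := ∑ k ∈ Finset.range (i + 1), (S.h n + S.s n k)

/-- `T` is steep: listing the nonzero elements of `H 0`, then `H 1`, etc., as `t 1, t 2, …`,
each successive element is at least `4` times the previous one. -/
def Steep (S : RankOne) : Prop :=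
  (∀ n i, i + 2 < S.r n → 4 * S.e n i ≤ S.e n (i + 1)) ∧
  (∀ n, 4 * S.e n (S.r n - 2) ≤ S.e (n + 1) 0)

/-- `T` is almost steep. -/
def AlmostSteep (S : RankOne) : Prop :=
  ∀ n, 3 ≤ S.r n ∧ S.s n 0 = 0 ∧ S.s n 1 = 1 ∧
    ∀ i, 2 ≤ i → i ≤ S.r n - 1 →
      4 * (∑ k ∈ Finset.range i, (S.h n + S.s n k)) ≤ ∑ k ∈ Finset.range (i + 1), (S.h n + S.s n k)

/-- `A` is a finite union of levels of `T`. -/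
def FinUnionLevels (S : RankOne) (A : Set ℝ) : Prop :=
  ∃ q : Finset (ℕ × ℕ), (∀ v ∈ q, v.2 < S.h v.1) ∧ A = ⋃ v ∈ q, S.lvl v.1 v.2

end RankOne

/-!
Write `I` for the unit interval and `D m` for the set of heights of its descendants in the column
`C m`, so that `D (m + 1) = D m + H m`. Up to a null set and at most `n` levels at the top of the
column, `I ∩ Tⁿ I` consists of the levels of `C m` at height `d + n` with `d, d + n ∈ D m`, so its
measure is governed by the number of such `d`.

Steepness makes the sums `d + b` with `d ∈ D m` and `b ∈ H m` so well separated that a given `n`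
arises as a difference of two of them in only one of two ways: either always with the same `b`,
and then the proportion of good `d` does not grow in passing from `m` to `m + 1`, or always with one
fixed pair of distinct `b`, and then that proportion is at most `1 / r m`. There is no good `d` in
`D J` when `n ≥ h J`, so for such `n` the proportion never exceeds `sup_{m ≥ J} 1 / r m`.
Letting `m → ∞` makes the levels at the top negligible, and `μ (I ∩ Tⁿ I) → 0`. The general case
follows because the images `Tᵖ I` cover `X`.
-/

theorem countable_Ioo_diff_biUnion_Ioo {α : Type*} [LinearOrder α] {f : ℕ → α} (hf : Monotone f)
    (n : ℕ) : (Ioo (f 0) (f n) \ ⋃ k ∈ Iio n, Ioo (f k) (f (k + 1))).Countable := by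
  refine (countable_range f).mono ?_
  rintro x ⟨hx, hxk⟩
  have hxIoc : x ∈ ⋃ k ∈ Ico 0 n, Ioc (f k) (f (k + 1)) :=
    (hf.biUnion_Ico_Ioc_map_succ 0 n).symm ▸ Ioo_subset_Ioc_self hx
  simp only [mem_iUnion, not_exists] at hxIoc hxk
  obtain ⟨k, hk, hkx, hxk'⟩ := hxIoc
  by_contra hrange
  exact hxk k hk.2 ⟨hkx, lt_of_le_of_ne hxk' fun h => hrange ⟨k + 1, h.symm⟩⟩

/-! ### Differences in sums of well separated sets -/

section Separation

open Finset

/-- The elements `d` of `D` whose translate `d + n` is again in `D`. -/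
def shiftOverlap (D : Finset ℕ) (n : ℕ) : Finset ℕ := {d ∈ D | d + n ∈ D}

/-- `H` is steep over `D`: distinct elements of `H` differ at least by a factor of `4`, and the
nonzero ones are at least three times as large as every element of `D`. For a steep rank-one
transformation this holds for `H m` over the heights of the descendants of the unit interval. -/
structure IsSteepOver (H D : Finset ℕ) : Prop where
  four_mul_le : ∀ ⦃a⦄, a ∈ H → ∀ ⦃b⦄, b ∈ H → a < b → 4 * a ≤ b
  three_mul_le : ∀ ⦃d⦄, d ∈ D → ∀ ⦃b⦄, b ∈ H → b ≠ 0 → 3 * d ≤ b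

namespace IsSteepOver

variable {D H : Finset ℕ} {n a b a' b' x y x' y' : ℕ}

theorem add_add_lt (hHD : IsSteepOver H D) (ha : a ∈ H) (hb : b ∈ H) (hab : a < b)
    (hx : x ∈ D) (hy : y ∈ D) : a + x + y < b := by
  have := hHD.four_mul_le ha hb hab
  have := hHD.three_mul_le hx hb (by omega)
  have := hHD.three_mul_le hy hb (by omega)
  omega

theorem lt_of_add_add_eq (hHD : IsSteepOver H D) (ha : a ∈ H) (hb : b ∈ H) (hx : x ∈ D)
    (hy : y ∈ D) (h : x + b + n = y + a) (hab : a ≠ b) : b < a := by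
  by_contra! hle
  have := hHD.add_add_lt ha hb (lt_of_le_of_ne hle hab) hx hy
  omega

theorem le_of_add_le (hHD : IsSteepOver H D) (ha : a ∈ H) (ha' : a' ∈ H) (hb' : b' ∈ H)
    (hx : x ∈ D) (hy : y ∈ D) (ha0 : a ≠ 0) (hlt' : b' < a') (h : a' ≤ a + b' + x + y) :
    a' ≤ a := by
  by_contra! hlt
  have := hHD.four_mul_le ha ha' hlt
  have := hHD.four_mul_le hb' ha' hlt'
  have := hHD.three_mul_le hx ha ha0
  have := hHD.three_mul_le hy ha ha0
  omega

theorem eq_of_add_add_eq (hHD : IsSteepOver H D) (ha : a ∈ H) (hb : b ∈ H) (ha' : a' ∈ H)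
    (hb' : b' ∈ H) (hx : x ∈ D) (hy : y ∈ D) (hx' : x' ∈ D) (hy' : y' ∈ D)
    (h : x + b + n = y + a) (h' : x' + b' + n = y' + a') (hab : a ≠ b) : b' = b := by
  have hlt : b < a := hHD.lt_of_add_add_eq ha hb hx hy h hab
  have hlt' : b' < a' := by
    refine hHD.lt_of_add_add_eq ha' hb' hx' hy' h' fun hab' => ?_
    have := hHD.add_add_lt hb ha hlt hx hy'
    omega
  have haa' : a = a' := le_antisymm
    (hHD.le_of_add_le ha' ha hb hy' hx (by omega) hlt (by omega))
    (hHD.le_of_add_le ha ha' hb' hy hx' (by omega) hlt' (by omega))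
  rcases lt_trichotomy b' b with hbb' | hbb' | hbb'
  · have := hHD.add_add_lt hb' hb hbb' hx' hy
    omega
  · exact hbb'
  · have := hHD.add_add_lt hb hb' hbb' hx hy'
    omega

theorem card_shiftOverlap_add_le (hHD : IsSteepOver H D) (n : ℕ) :
    #(shiftOverlap (D + H) n) ≤ max (#(shiftOverlap D n) * #H) #D := by
  by_cases hcarry : ∃ x ∈ D, ∃ b ∈ H, ∃ y ∈ D, ∃ a ∈ H, x + b + n = y + a ∧ a ≠ b
  · obtain ⟨x, hx, b, hb, y, hy, a, ha, h, hab⟩ := hcarry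
    have hsub : shiftOverlap (D + H) n ⊆ D + {b} := by
      intro d hd
      obtain ⟨hd, hdn⟩ := mem_filter.1 hd
      obtain ⟨x', hx', b', hb', rfl⟩ := mem_add.1 hd
      obtain ⟨y', hy', a', ha', h'⟩ := mem_add.1 hdn
      rw [hHD.eq_of_add_add_eq ha hb ha' hb' hx hy hx' hy' h h'.symm hab]
      exact add_mem_add hx' (mem_singleton_self b)
    refine le_max_of_le_right ?_
    simpa using (Finset.card_le_card hsub).trans card_add_le
  · push Not at hcarry
    have hsub : shiftOverlap (D + H) n ⊆ shiftOverlap D n + H := by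
      intro d hd
      obtain ⟨hd, hdn⟩ := mem_filter.1 hd
      obtain ⟨x, hx, b, hb, rfl⟩ := mem_add.1 hd
      obtain ⟨y, hy, a, ha, h⟩ := mem_add.1 hdn
      have hab : a = b := hcarry x hx b hb y hy a ha h.symm
      have hxy : x + n = y := by omega
      exact add_mem_add (mem_filter.2 ⟨hx, hxy ▸ hy⟩) hb
    exact le_max_of_le_left ((Finset.card_le_card hsub).trans card_add_le)

end IsSteepOver

end Separation

/-! ### Decay of correlations from a sweeping set -/

section Correlations

variable {α : Type*} [MeasurableSpace α] {μ : Measure α} {T : α ≃ᵐ α}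

theorem measure_image_iterate (hT : MeasurePreserving T μ μ) (n : ℕ) (A : Set α) :
    μ (T^[n] '' A) = μ A := by
  induction n with
  | zero => simp
  | succ n ih =>
    rw [Function.iterate_succ', image_comp, T.image_eq_preimage_symm,
      (hT.symm T).measure_preimage_equiv, ih]

theorem measurableSet_image_iterate (n : ℕ) {A : Set α} (hA : MeasurableSet A) :
    MeasurableSet (T^[n] '' A) := by
  induction n with
  | zero => simpa
  | succ n ih =>
    rw [Function.iterate_succ', image_comp]
    exact T.measurableSet_image.2 ih

theorem measure_inter_image_iterate_le (hT : MeasurePreserving T μ μ) (n : ℕ) (A U : Set α) :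
    μ (A ∩ T^[n] '' A) ≤ μ (A \ U) + μ (A \ U) + μ (U ∩ T^[n] '' U) := by
  have hsub : A ∩ T^[n] '' A ⊆ A \ U ∪ T^[n] '' (A \ U) ∪ U ∩ T^[n] '' U := by
    rintro _ ⟨hy, x, hx, rfl⟩
    by_cases hyU : T^[n] x ∈ U
    · by_cases hxU : x ∈ U
      · exact Or.inr ⟨hyU, mem_image_of_mem _ hxU⟩
      · exact Or.inl (Or.inr (mem_image_of_mem _ ⟨hx, hxU⟩))
    · exact Or.inl (Or.inl ⟨hy, hyU⟩)
  calc μ (A ∩ T^[n] '' A)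
      ≤ μ (A \ U ∪ T^[n] '' (A \ U) ∪ U ∩ T^[n] '' U) := measure_mono hsub
    _ ≤ μ (A \ U) + μ (T^[n] '' (A \ U)) + μ (U ∩ T^[n] '' U) :=
        (measure_union_le _ _).trans (by gcongr; exact measure_union_le _ _)
    _ = μ (A \ U) + μ (A \ U) + μ (U ∩ T^[n] '' U) := by rw [measure_image_iterate hT]

theorem tendsto_measure_image_inter_image {I : Set α} (hT : MeasurePreserving T μ μ)
    (hI : Tendsto (fun n => μ (I ∩ T^[n] '' I)) atTop (nhds 0)) (p q : ℕ) :
    Tendsto (fun n => μ (T^[p] '' I ∩ T^[n] '' (T^[q] '' I))) atTop (nhds 0) := by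
  have hshift : Tendsto (fun n => n - p + q) atTop atTop :=
    tendsto_atTop_mono (fun n => Nat.le_add_right (n - p) q) (tendsto_sub_atTop_nat p)
  refine (hI.comp hshift).congr' ?_
  filter_upwards [eventually_ge_atTop p] with n hn
  rw [Function.comp_apply, ← measure_image_iterate hT p, image_inter (T.injective.iterate p),
    ← image_comp, ← image_comp, ← Function.iterate_add, ← Function.iterate_add,
    show p + (n - p + q) = n + q by omega]

theorem tendsto_measure_accumulate_inter_image {I : Set α} (hT : MeasurePreserving T μ μ)
    (hI : Tendsto (fun n => μ (I ∩ T^[n] '' I)) atTop (nhds 0)) (P : ℕ) :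
    Tendsto (fun n => μ (accumulate (fun p => T^[p] '' I) P ∩
      T^[n] '' accumulate (fun p => T^[p] '' I) P)) atTop (nhds 0) := by
  have hsum : Tendsto (fun n => ∑ p ∈ Finset.Iic P, ∑ q ∈ Finset.Iic P,
      μ (T^[p] '' I ∩ T^[n] '' (T^[q] '' I))) atTop (nhds 0) := by
    simpa using tendsto_finsetSum (Finset.Iic P) fun p _ =>
      tendsto_finsetSum (Finset.Iic P) fun q _ => tendsto_measure_image_inter_image hT hI p q
  refine tendsto_of_tendsto_of_tendsto_of_le_of_le tendsto_const_nhds hsum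
    (fun _ => zero_le) fun n => ?_
  have hsub : accumulate (fun p => T^[p] '' I) P ∩ T^[n] '' accumulate (fun p => T^[p] '' I) P ⊆
      ⋃ p ∈ Finset.Iic P, ⋃ q ∈ Finset.Iic P, T^[p] '' I ∩ T^[n] '' (T^[q] '' I) := by
    rintro _ ⟨hy, x, hx, rfl⟩
    obtain ⟨p, hp, hyp⟩ := mem_accumulate.1 hy
    obtain ⟨q, hq, hxq⟩ := mem_accumulate.1 hx
    simp only [mem_iUnion, Finset.mem_Iic]
    exact ⟨p, hp, q, hq, hyp, mem_image_of_mem _ hxq⟩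
  refine (measure_mono hsub).trans ((measure_biUnion_finset_le _ _).trans ?_)
  exact Finset.sum_le_sum fun p _ => measure_biUnion_finset_le _ _

theorem tendsto_measure_diff_accumulate {f : ℕ → Set α} (hf : ∀ p, MeasurableSet (f p))
    (hcover : ∀ᵐ x ∂μ, x ∈ ⋃ p, f p) {A : Set α} (hA : MeasurableSet A) (hAfin : μ A ≠ ⊤) :
    Tendsto (fun P => μ (A \ accumulate f P)) atTop (nhds 0) := by
  have hnull : μ (⋂ P, A \ accumulate f P) = 0 := by
    refine measure_mono_null (t := (⋃ p, f p)ᶜ) (fun x hx hxf => ?_) (mem_ae_iff.1 hcover)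
    rw [← iUnion_accumulate] at hxf
    obtain ⟨P, hP⟩ := mem_iUnion.1 hxf
    exact (mem_iInter.1 hx P).2 hP
  rw [← hnull]
  refine tendsto_measure_iInter_atTop
    (fun P => (hA.diff (.biUnion (to_countable _) fun p _ => hf p)).nullMeasurableSet)
    (fun P Q hPQ => sdiff_subset_sdiff_right (monotone_accumulate hPQ))
    ⟨0, measure_ne_top_of_subset sdiff_subset hAfin⟩

theorem tendsto_measure_inter_image_of_sweeping {I : Set α} (hT : MeasurePreserving T μ μ)
    (hImeas : MeasurableSet I) (hsweep : ∀ᵐ x ∂μ, x ∈ ⋃ p : ℕ, T^[p] '' I)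
    (hI : Tendsto (fun n => μ (I ∩ T^[n] '' I)) atTop (nhds 0))
    {A : Set α} (hA : MeasurableSet A) (hAfin : μ A ≠ ⊤) :
    Tendsto (fun n => μ (A ∩ T^[n] '' A)) atTop (nhds 0) := by
  rw [ENNReal.tendsto_nhds_zero]
  intro ε hε
  have hε3 : 0 < ε / 3 := ENNReal.div_pos hε.ne' (by norm_num)
  have hrest := tendsto_measure_diff_accumulate
    (fun p => measurableSet_image_iterate (T := T) p hImeas) hsweep hA hAfin
  obtain ⟨P, hP⟩ := (ENNReal.tendsto_nhds_zero.1 hrest _ hε3).exists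
  have hcore := tendsto_measure_accumulate_inter_image hT hI P
  filter_upwards [ENNReal.tendsto_nhds_zero.1 hcore _ hε3] with n hn
  calc μ (A ∩ T^[n] '' A) ≤ _ := measure_inter_image_iterate_le hT n A _
    _ ≤ ε / 3 + ε / 3 + ε / 3 := by gcongr
    _ = ε := ENNReal.add_thirds ε

end Correlations

namespace RankOne

variable (S : RankOne)

/-! ### Heights of the descendants of the unit interval -/

section Heights

/-- The height in `C (m + 1)` of the bottom of the `k`-th subcolumn of `C m`. Thus `H m` consists
of the values at `k < r m`, and `e m i` is the value at `i + 1`. -/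
def subcolBase (m k : ℕ) : ℕ := ∑ i ∈ Finset.range k, (S.h m + S.s m i)

theorem subcolBase_mono (m : ℕ) : Monotone (S.subcolBase m) :=
  fun _ _ hab => Finset.sum_le_sum_of_subset (Finset.range_mono hab)

theorem h_add_subcolBase_le {m k : ℕ} (hk : k < S.r m) :
    S.h m + S.subcolBase m k ≤ S.h (m + 1) := by
  have hsucc : S.subcolBase m (k + 1) = S.subcolBase m k + (S.h m + S.s m k) :=
    Finset.sum_range_succ _ _
  have htop : S.subcolBase m (k + 1) ≤ S.h (m + 1) := by
    rw [S.hrec]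
    exact S.subcolBase_mono m hk
  omega

theorem h_pos (m : ℕ) : 0 < S.h m := by
  induction m with
  | zero => simp [S.h0]
  | succ m ih =>
    have := S.h_add_subcolBase_le (zero_lt_two.trans_le (S.hr m))
    omega

theorem Hset_eq_image (m : ℕ) : S.Hset m = (Finset.range (S.r m)).image (S.subcolBase m) := by
  have hr : S.r m = S.r m - 1 + 1 := by have := S.hr m; omega
  rw [hr, Finset.range_add_one', Finset.image_insert, Finset.map_eq_image,
    Finset.image_image]
  rfl

theorem mem_Hset {m b : ℕ} : b ∈ S.Hset m ↔ ∃ k < S.r m, S.subcolBase m k = b := by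
  simp [Hset_eq_image]

theorem card_Hset_le (m : ℕ) : (S.Hset m).card ≤ S.r m := by
  rw [Hset_eq_image]
  exact Finset.card_image_le.trans (Finset.card_range _).le

theorem desc_zero_succ (p m : ℕ) : S.desc 0 p (m + 1) = S.desc 0 p m + S.Hset m := by
  simp [desc]

theorem lt_h_of_mem_desc {m d : ℕ} (hd : d ∈ S.desc 0 0 m) : d < S.h m := by
  induction m generalizing d with
  | zero => simp_all [desc, S.h0]
  | succ m ih =>
    rw [desc_zero_succ] at hd
    obtain ⟨x, hx, b, hb, rfl⟩ := Finset.mem_add.1 hd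
    obtain ⟨k, hk, rfl⟩ := S.mem_Hset.1 hb
    have := S.h_add_subcolBase_le hk
    have := ih hx
    omega

end Heights

section Steepness

variable {S}

theorem Steep.four_mul_le (hS : S.Steep) {m a b : ℕ} (ha : a ∈ S.Hset m) (hb : b ∈ S.Hset m)
    (hab : a < b) : 4 * a ≤ b := by
  obtain ⟨i, -, rfl⟩ := S.mem_Hset.1 ha
  obtain ⟨j, hj, rfl⟩ := S.mem_Hset.1 hb
  have hij : i < j := (S.subcolBase_mono m).reflect_lt hab
  match j, hij with
  | 1, hij => simp [show i = 0 by omega, subcolBase]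
  | j + 2, hij =>
    calc 4 * S.subcolBase m i ≤ 4 * S.subcolBase m (j + 1) := by
          gcongr
          exact S.subcolBase_mono m (by omega)
      _ ≤ S.subcolBase m (j + 2) := hS.1 m j hj

theorem subcolBase_one_le {m b : ℕ} (hb : b ∈ S.Hset m) (hb0 : b ≠ 0) :
    S.subcolBase m 1 ≤ b := by
  obtain ⟨k, -, rfl⟩ := S.mem_Hset.1 hb
  refine S.subcolBase_mono m (Nat.one_le_iff_ne_zero.2 ?_)
  rintro rfl
  exact hb0 rfl

theorem Steep.three_mul_le (hS : S.Steep) {m d b : ℕ} (hd : d ∈ S.desc 0 0 m)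
    (hb : b ∈ S.Hset m) (hb0 : b ≠ 0) : 3 * d ≤ b := by
  induction m generalizing d b with
  | zero => simp_all [desc]
  | succ m ih =>
    rw [desc_zero_succ] at hd
    obtain ⟨x, hx, a, ha, rfl⟩ := Finset.mem_add.1 hd
    have hr := S.hr m
    set t := S.subcolBase m (S.r m - 1)
    have hx_le : 3 * x ≤ t := by
      refine ih hx (S.mem_Hset.2 ⟨_, by omega, rfl⟩) (ne_of_gt ?_)
      calc 0 < S.subcolBase m 1 := by simp [subcolBase, S.h_pos m]
        _ ≤ t := S.subcolBase_mono m (by omega)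
    have ha_le : a ≤ t := by
      obtain ⟨k, hk, rfl⟩ := S.mem_Hset.1 ha
      exact S.subcolBase_mono m (by omega)
    have ht_le : 4 * t ≤ S.subcolBase (m + 1) 1 := by
      have := hS.2 m
      rwa [e, show S.r m - 2 + 1 = S.r m - 1 by omega] at this
    have := subcolBase_one_le hb hb0
    omega

theorem Steep.isSteepOver (hS : S.Steep) (m : ℕ) : IsSteepOver (S.Hset m) (S.desc 0 0 m) :=
  ⟨fun _ ha _ hb => hS.four_mul_le ha hb, fun _ hd _ hb => hS.three_mul_le hd hb⟩

end Steepness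

/-! ### Proportion of returns among the descendants -/

section Widths

theorem r_pos (m : ℕ) : (0 : ℝ) < S.r m := by
  exact_mod_cast zero_lt_two.trans_le (S.hr m)

theorem w_pos (m : ℕ) : 0 < S.w m := by
  induction m with
  | zero => simp [S.w0]
  | succ m ih => exact S.wrec m ▸ div_pos ih (S.r_pos m)

theorem r_mul_w_succ (m : ℕ) : S.r m * S.w (m + 1) = S.w m := by
  rw [S.wrec, mul_div_cancel₀ _ (S.r_pos m).ne']

theorem w_le (m : ℕ) : S.w m ≤ (1 / 2) ^ m := by
  induction m with
  | zero => simp [S.w0]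
  | succ m ih =>
    have hr : (2 : ℝ) ≤ S.r m := by exact_mod_cast S.hr m
    have := mul_le_mul_of_nonneg_right hr (S.w_pos (m + 1)).le
    rw [r_mul_w_succ] at this
    rw [pow_succ]
    linarith

theorem tendsto_w : Tendsto S.w atTop (nhds 0) :=
  squeeze_zero (fun m => (S.w_pos m).le) S.w_le
    (tendsto_pow_atTop_nhds_zero_of_lt_one (by norm_num) (by norm_num))

theorem card_desc_mul_w_le (m : ℕ) : (S.desc 0 0 m).card * S.w m ≤ 1 := by
  induction m with
  | zero => simp [desc, S.w0]
  | succ m ih =>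
    have hcard : (S.desc 0 0 (m + 1)).card ≤ (S.desc 0 0 m).card * S.r m := by
      rw [desc_zero_succ]
      exact Finset.card_add_le.trans (Nat.mul_le_mul_left _ (S.card_Hset_le m))
    calc ((S.desc 0 0 (m + 1)).card : ℝ) * S.w (m + 1)
        ≤ ((S.desc 0 0 m).card * S.r m) * S.w (m + 1) := by
          have := S.w_pos (m + 1)
          gcongr
          exact_mod_cast hcard
      _ = (S.desc 0 0 m).card * S.w m := by rw [mul_assoc, r_mul_w_succ]
      _ ≤ 1 := ih

theorem shiftOverlap_desc_eq_empty {m n : ℕ} (hn : S.h m ≤ n) :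
    shiftOverlap (S.desc 0 0 m) n = ∅ := by
  refine Finset.filter_eq_empty_iff.2 fun d _ hdn => ?_
  have := S.lt_h_of_mem_desc hdn
  omega

variable {S}

theorem Steep.card_shiftOverlap_mul_w_succ_le (hS : S.Steep) (m n : ℕ) :
    (shiftOverlap (S.desc 0 0 (m + 1)) n).card * S.w (m + 1) ≤
      max ((shiftOverlap (S.desc 0 0 m) n).card * S.w m) (S.r m : ℝ)⁻¹ := by
  have hw := (S.w_pos (m + 1)).le
  have hcard := (hS.isSteepOver m).card_shiftOverlap_add_le n
  rw [← desc_zero_succ] at hcard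
  rcases le_max_iff.1 hcard with hle | hle
  · refine le_max_of_le_left ?_
    rw [← S.r_mul_w_succ m, ← mul_assoc]
    gcongr
    exact_mod_cast hle.trans (Nat.mul_le_mul_left _ (S.card_Hset_le m))
  · refine le_max_of_le_right ?_
    calc ((shiftOverlap (S.desc 0 0 (m + 1)) n).card : ℝ) * S.w (m + 1)
        ≤ (S.desc 0 0 m).card * S.w (m + 1) := by gcongr
      _ = (S.desc 0 0 m).card * S.w m / S.r m := by rw [S.wrec, mul_div_assoc]
      _ ≤ 1 / S.r m := by
          gcongr
          exact S.card_desc_mul_w_le m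
      _ = (S.r m : ℝ)⁻¹ := one_div _

theorem Steep.card_shiftOverlap_mul_w_le (hS : S.Steep) {c J n m : ℕ} (hc : 0 < c)
    (hr : ∀ k ≥ J, c ≤ S.r k) (hn : S.h J ≤ n) (hm : J ≤ m) :
    (shiftOverlap (S.desc 0 0 m) n).card * S.w m ≤ (c : ℝ)⁻¹ := by
  induction m, hm using Nat.le_induction with
  | base => simp [S.shiftOverlap_desc_eq_empty hn]
  | succ m hm ih =>
    refine (hS.card_shiftOverlap_mul_w_succ_le m n).trans (max_le ih ?_)
    gcongr
    exact hr m hm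

end Widths

/-! ### Levels and the measure of returns -/

section Levels

variable {S}

theorem add_pos_sub_mem_lvl {m i : ℕ} {x : ℝ} (hx : x ∈ S.lvl m i) (j : ℕ) :
    x + (S.pos m j - S.pos m i) ∈ S.lvl m j := by
  obtain ⟨hl, hu⟩ := hx
  constructor <;> linarith

theorem iterate_apply_of_mem_lvl {m i j : ℕ} (hij : i + j < S.h m) {x : ℝ} (hx : x ∈ S.lvl m i) :
    S.T^[j] x = x + (S.pos m (i + j) - S.pos m i) := by
  induction j with
  | zero => simp
  | succ j ih =>
    rw [Function.iterate_succ_apply', ih (by omega),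
      S.Tmap m (i + j) hij _ (add_pos_sub_mem_lvl hx _), ← add_assoc i j 1]
    ring

theorem iterate_mem_lvl {m i j : ℕ} (hij : i + j < S.h m) {x : ℝ} (hx : x ∈ S.lvl m i) :
    S.T^[j] x ∈ S.lvl m (i + j) := by
  rw [iterate_apply_of_mem_lvl hij hx]
  exact add_pos_sub_mem_lvl hx _

variable (S)

theorem measurePreserving_T : MeasurePreserving S.T S.μ S.μ := S.Tpres

theorem pos_zero (m : ℕ) : S.pos m 0 = 0 := by
  induction m with
  | zero => exact S.pos0
  | succ m ih => simpa [ih] using S.stack m 0 (S.h_pos m) 0 (zero_lt_two.trans_le (S.hr m))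

theorem lvl_zero_subset (m : ℕ) : S.lvl m 0 ⊆ S.lvl 0 0 := by
  refine Ioo_subset_Ioo (by simp [pos_zero]) ?_
  rw [pos_zero, pos_zero, S.w0]
  exact add_le_add_right ((S.w_le m).trans (pow_le_one₀ (by norm_num) (by norm_num))) 0

theorem X_subset_iUnion_image : S.X ⊆ ⋃ p : ℕ, S.T^[p] '' S.lvl 0 0 := by
  intro x hx
  simp only [S.hX, mem_iUnion] at hx
  obtain ⟨m, j, hj, hxj⟩ := hx
  have hy : x + (S.pos m 0 - S.pos m j) ∈ S.lvl m 0 := add_pos_sub_mem_lvl hxj 0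
  refine mem_iUnion.2 ⟨j, _, S.lvl_zero_subset m hy, ?_⟩
  rw [iterate_apply_of_mem_lvl (by omega) hy, zero_add]
  ring

theorem ae_mem_iUnion_image : ∀ᵐ x ∂S.μ, x ∈ ⋃ p : ℕ, S.T^[p] '' S.lvl 0 0 := by
  have hX : MeasurableSet S.X := by
    rw [S.hX]
    exact .iUnion fun n => .iUnion fun j => .iUnion fun _ => measurableSet_Ioo
  exact (ae_restrict_mem hX).mono fun _ hx => S.X_subset_iUnion_image hx

theorem countable_lvl_diff {m j : ℕ} (hj : j < S.h m) :
    (S.lvl m j \ ⋃ b ∈ S.Hset m, S.lvl (m + 1) (j + b)).Countable := by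
  have hmono : Monotone fun k : ℕ => S.pos m j + k * S.w (m + 1) := by
    have := (S.w_pos (m + 1)).le
    intro a b hab
    dsimp only
    gcongr
  refine (countable_Ioo_diff_biUnion_Ioo hmono (S.r m)).mono ?_
  rw [r_mul_w_succ, Nat.cast_zero, zero_mul, add_zero]
  refine sdiff_subset_sdiff_right (iUnion₂_subset fun k hk => ?_)
  refine subset_iUnion₂_of_subset (S.subcolBase m k) (S.mem_Hset.2 ⟨k, hk, rfl⟩) ?_
  rw [lvl, add_comm j, subcolBase, S.stack m j hj k hk, Nat.cast_succ, add_one_mul, add_assoc]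

theorem countable_unitInterval_diff (m : ℕ) :
    (S.lvl 0 0 \ ⋃ d ∈ S.desc 0 0 m, S.lvl m d).Countable := by
  induction m with
  | zero => simp [desc]
  | succ m ih =>
    have hcuts := (S.desc 0 0 m).countable_toSet.biUnion fun d hd =>
      S.countable_lvl_diff (S.lt_h_of_mem_desc hd)
    refine (ih.union hcuts).mono ?_
    rintro x ⟨hx, hx_succ⟩
    by_cases hxm : x ∈ ⋃ d ∈ S.desc 0 0 m, S.lvl m d
    · obtain ⟨d, hd, hxd⟩ := mem_iUnion₂.1 hxm
      refine Or.inr (mem_biUnion hd ⟨hxd, fun hxb => hx_succ ?_⟩)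
      obtain ⟨b, hb, hxb⟩ := mem_iUnion₂.1 hxb
      rw [desc_zero_succ]
      exact mem_biUnion (Finset.add_mem_add hd hb) hxb
    · exact Or.inl ⟨hx, hxm⟩

theorem measure_unitInterval_diff (m : ℕ) :
    S.μ (S.lvl 0 0 \ ⋃ d ∈ S.desc 0 0 m, S.lvl m d) = 0 :=
  Measure.restrict_le_self.absolutelyContinuous ((S.countable_unitInterval_diff m).measure_zero _)

theorem measure_lvl_le (m j : ℕ) : S.μ (S.lvl m j) ≤ ENNReal.ofReal (S.w m) := by
  refine (Measure.restrict_apply_le _ _).trans ?_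
  rw [lvl, Real.volume_Ioo, add_sub_cancel_left]

/-- The heights `d` of descendants of the unit interval in `C m` for which `Tⁿ` may send points of
the level at height `d` back into the unit interval: either `d + n` is again such a height, or it
lies beyond the top of the column, where `C m` carries no information about `Tⁿ`. -/
def returnHeights (m n : ℕ) : Finset ℕ :=
  shiftOverlap (S.desc 0 0 m) n ∪ {d ∈ S.desc 0 0 m | S.h m ≤ d + n}

theorem card_returnHeights_le (m n : ℕ) :
    (S.returnHeights m n).card ≤ (shiftOverlap (S.desc 0 0 m) n).card + n := by
  refine (Finset.card_union_le _ _).trans (Nat.add_le_add_left ?_ _)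
  have hsub : {d ∈ S.desc 0 0 m | S.h m ≤ d + n} ⊆ Finset.Ico (S.h m - n) (S.h m) := by
    intro d hd
    obtain ⟨hd, hdn⟩ := Finset.mem_filter.1 hd
    exact Finset.mem_Ico.2 ⟨by omega, S.lt_h_of_mem_desc hd⟩
  have := Finset.card_le_card hsub
  rw [Nat.card_Ico] at this
  omega

theorem iUnion_lvl_inter_image_subset (m n : ℕ) :
    (⋃ d ∈ S.desc 0 0 m, S.lvl m d) ∩ S.T^[n] '' (⋃ d ∈ S.desc 0 0 m, S.lvl m d) ⊆
      ⋃ d ∈ S.returnHeights m n, S.T^[n] '' S.lvl m d := by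
  rintro _ ⟨hy, x, hx, rfl⟩
  obtain ⟨d, hd, hxd⟩ := mem_iUnion₂.1 hx
  obtain ⟨d', hd', hyd'⟩ := mem_iUnion₂.1 hy
  refine mem_iUnion₂.2 ⟨d, Finset.mem_union.2 ?_, mem_image_of_mem _ hxd⟩
  rcases lt_or_ge (d + n) (S.h m) with hlt | hge
  · have hdd' : d' = d + n := by
      by_contra hne
      exact disjoint_left.1 (S.disj m d' (S.lt_h_of_mem_desc hd') _ hlt hne) hyd'
        (iterate_mem_lvl hlt hxd)
    exact Or.inl (Finset.mem_filter.2 ⟨hd, hdd' ▸ hd'⟩)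
  · exact Or.inr (Finset.mem_filter.2 ⟨hd, hge⟩)

theorem measure_unitInterval_inter_image_le (m n : ℕ) :
    S.μ (S.lvl 0 0 ∩ S.T^[n] '' S.lvl 0 0) ≤
      ENNReal.ofReal ((shiftOverlap (S.desc 0 0 m) n).card * S.w m + n * S.w m) := by
  set U := ⋃ d ∈ S.desc 0 0 m, S.lvl m d with hU
  have hw := (S.w_pos m).le
  calc S.μ (S.lvl 0 0 ∩ S.T^[n] '' S.lvl 0 0)
      ≤ S.μ (U ∩ S.T^[n] '' U) := by
        simpa [hU, S.measure_unitInterval_diff m] using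
          measure_inter_image_iterate_le S.measurePreserving_T n (S.lvl 0 0) U
    _ ≤ ∑ d ∈ S.returnHeights m n, S.μ (S.T^[n] '' S.lvl m d) :=
        (measure_mono (S.iUnion_lvl_inter_image_subset m n)).trans (measure_biUnion_finset_le _ _)
    _ ≤ ∑ _d ∈ S.returnHeights m n, ENNReal.ofReal (S.w m) :=
        Finset.sum_le_sum fun d _ =>
          (measure_image_iterate S.measurePreserving_T n _).le.trans (S.measure_lvl_le m d)
    _ = ENNReal.ofReal ((S.returnHeights m n).card * S.w m) := by
        rw [Finset.sum_const, nsmul_eq_mul, ENNReal.ofReal_mul (Nat.cast_nonneg _),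
          ENNReal.ofReal_natCast]
    _ ≤ _ := by
        rw [← add_mul]
        gcongr
        exact_mod_cast S.card_returnHeights_le m n

variable {S}

theorem Steep.measure_unitInterval_inter_image_le_inv (hS : S.Steep) {c J n : ℕ} (hc : 0 < c)
    (hr : ∀ k ≥ J, c ≤ S.r k) (hn : S.h J ≤ n) :
    S.μ (S.lvl 0 0 ∩ S.T^[n] '' S.lvl 0 0) ≤ (c : ENNReal)⁻¹ := by
  have hlim : Tendsto (fun m => ENNReal.ofReal ((c : ℝ)⁻¹ + n * S.w m)) atTop
      (nhds (ENNReal.ofReal (c : ℝ)⁻¹)) := by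
    refine ENNReal.tendsto_ofReal ?_
    simpa using (S.tendsto_w.const_mul (n : ℝ)).const_add (c : ℝ)⁻¹
  rw [← ENNReal.ofReal_natCast c, ← ENNReal.ofReal_inv_of_pos (Nat.cast_pos.2 hc)]
  refine ge_of_tendsto hlim ?_
  filter_upwards [eventually_ge_atTop J] with m hm
  refine (S.measure_unitInterval_inter_image_le m n).trans ?_
  gcongr
  exact hS.card_shiftOverlap_mul_w_le hc hr hn hm

theorem Steep.tendsto_measure_unitInterval_inter_image (hS : S.Steep)
    (hr : Tendsto S.r atTop atTop) :
    Tendsto (fun n => S.μ (S.lvl 0 0 ∩ S.T^[n] '' S.lvl 0 0)) atTop (nhds 0) := by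
  rw [ENNReal.tendsto_nhds_zero]
  intro ε hε
  obtain ⟨c, hcε⟩ := ENNReal.exists_inv_nat_lt hε.ne'
  have hc : 0 < c := by
    rw [Nat.pos_iff_ne_zero]
    rintro rfl
    simp at hcε
  obtain ⟨J, hJ⟩ := eventually_atTop.1 (hr.eventually_ge_atTop c)
  filter_upwards [eventually_ge_atTop (S.h J)] with n hn
  exact (hS.measure_unitInterval_inter_image_le_inv hc hJ hn).trans hcε.le

end Levels

end RankOne

theorem statement16_general (S : RankOne) (hsteep : S.Steep) (hr : Tendsto S.r atTop atTop) :
    S.ZeroType := fun _ hA hAfin =>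
  tendsto_measure_inter_image_of_sweeping S.measurePreserving_T measurableSet_Ioo
    S.ae_mem_iUnion_image (hsteep.tendsto_measure_unitInterval_inter_image hr) hA hAfin

/-- A normal, steep rank-one transformation whose sequence of cuts `(r n)`
is nondecreasing and unbounded is zero-type. -/
theorem statement16 (S : RankOne) (hnorm : S.Normal) (hsteep : S.Steep)
    (hmono : Monotone S.r) (hunbdd : ∀ c, ∃ n, c < S.r n) :
    S.ZeroType :=
  statement16_general S hsteep
    (tendsto_atTop_atTop_of_monotone hmono fun c => (hunbdd c).imp fun _ => le_of_lt)
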